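/- Let μ be a probability measure on ℝ^K, m ∈ ℝ^K, and Σ a positive semidefinite K×K real matrix. If there exists an open neighborhood V of the origin such that the characteristic function of μ satisfies φ_μ(ω) = exp(i⟨m,ω⟩ − ½⟨ω, Σω⟩) for all ω ∈ V, then this identity holds for all ω ∈ ℝ^K; equivalently, μ is the Gaussian measure on ℝ^K with mean m and covariance Σ. -/

import Mathlib

open MeasureTheory

/-- Characteristic function of a probability measure on `ℝ^K`. -/
noncomputable def charM {K : ℕ} (μ : Measure (Fin K → ℝ)) (s : Fin K → ℝ) : ℂ :=
  ∫ x, Complex.exp (Complex.I * ((∑ k, s k * x k : ℝ) : ℂ)) ∂μ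

/-- The characteristic function of the Gaussian measure on `ℝ^K` with mean `m`
and covariance `Σ`: `ω ↦ exp(i⟨m,ω⟩ − ½⟨ω,Σω⟩)`. -/
noncomputable def gaussCF {K : ℕ} (m : Fin K → ℝ) (S : Matrix (Fin K) (Fin K) ℝ)
    (ω : Fin K → ℝ) : ℂ :=
  Complex.exp (Complex.I * ((∑ k, m k * ω k : ℝ) : ℂ)
    - (1 / 2 : ℂ) * ((∑ k1, ∑ k2, ω k1 * S k1 k2 * ω k2 : ℝ) : ℂ))

open ProbabilityTheory Filter Topology

lemma aux_sin_pow_expand (ν : Measure ℝ) [IsProbabilityMeasure ν] (h : ℝ) (N : ℕ) :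
    ((∫ x, (Real.sin (h * x)) ^ N ∂ν : ℝ) : ℂ) =
      ∑ j ∈ Finset.range (N + 1), (Complex.I / 2) ^ N * ((-1) ^ (N - j) * (N.choose j : ℂ)) *
        charFun ν (h * ((N : ℝ) - 2 * j)) := by
  have hpt : ∀ x : ℝ, (((Real.sin (h * x)) ^ N : ℝ) : ℂ) =
      ∑ j ∈ Finset.range (N + 1), (Complex.I / 2) ^ N * ((-1) ^ (N - j) * (N.choose j : ℂ)) *
        Complex.exp (((h * ((N : ℝ) - 2 * j) : ℝ) : ℂ) * x * Complex.I) := by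
    intro x
    have e1 : (((Real.sin (h * x)) ^ N : ℝ) : ℂ) = (Complex.I / 2) ^ N *
        (Complex.exp (-((h * x : ℝ) : ℂ) * Complex.I) +
          -Complex.exp (((h * x : ℝ) : ℂ) * Complex.I)) ^ N := by
      rw [← mul_pow]
      push_cast [Complex.sin]
      congr 1
      ring
    rw [e1, add_pow, Finset.mul_sum]
    refine Finset.sum_congr rfl fun j hj => ?_
    have hj' : j ≤ N := by simpa [Nat.lt_succ_iff] using hj
    rw [neg_pow (Complex.exp _), ← Complex.exp_nat_mul, ← Complex.exp_nat_mul]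
    have e2 : Complex.exp (((h * ((N : ℝ) - 2 * j) : ℝ) : ℂ) * x * Complex.I) =
        Complex.exp (j * (-((h * x : ℝ) : ℂ) * Complex.I)) *
        Complex.exp ((N - j : ℕ) * (((h * x : ℝ) : ℂ) * Complex.I)) := by
      rw [← Complex.exp_add]
      congr 1
      push_cast [Nat.cast_sub hj']
      ring
    rw [e2]
    ring
  rw [← integral_complex_ofReal]
  simp_rw [hpt]
  rw [integral_finsetSum]
  · refine Finset.sum_congr rfl fun j _ => ?_
    rw [integral_const_mul, charFun_apply_real]
  · intro j _
    refine Integrable.const_mul ?_ _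
    refine Integrable.of_bound (C := 1) (by fun_prop) (ae_of_all _ fun x => ?_)
    rw [← Complex.ofReal_mul, Complex.norm_exp_ofReal_mul_I]

lemma aux_sin_pow_eq (ν γ : Measure ℝ) [IsProbabilityMeasure ν] [IsProbabilityMeasure γ]
    (ε : ℝ) (hcf : ∀ t, |t| < ε → charFun ν t = charFun γ t) (h : ℝ) (N : ℕ)
    (hh : 0 < h) (hN : h * N < ε) :
    ∫ x, (Real.sin (h * x)) ^ N ∂ν = ∫ x, (Real.sin (h * x)) ^ N ∂γ := by
  apply Complex.ofReal_injective
  rw [aux_sin_pow_expand, aux_sin_pow_expand]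
  refine Finset.sum_congr rfl fun j hj => ?_
  have hj' : (j : ℝ) ≤ N := by
    have : j ≤ N := by simpa [Nat.lt_succ_iff] using hj
    exact_mod_cast this
  rw [hcf]
  rw [abs_mul, abs_of_pos hh]
  refine lt_of_le_of_lt ?_ hN
  refine mul_le_mul_of_nonneg_left ?_ hh.le
  rw [abs_le]
  constructor <;> linarith [(Nat.cast_nonneg j : (0 : ℝ) ≤ j)]

lemma aux_sinc (h x : ℝ) (hh : 0 < h) : x * Real.sinc (h * x) = h⁻¹ * Real.sin (h * x) := by
  by_cases hx : x = 0
  · simp [hx]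
  · rw [Real.sinc_of_ne_zero (mul_ne_zero hh.ne' hx)]
    field_simp

lemma aux_moment_le (ν γ : Measure ℝ) [IsProbabilityMeasure ν] [IsProbabilityMeasure γ]
    (ε : ℝ) (hε : 0 < ε) (hcf : ∀ t, |t| < ε → charFun ν t = charFun γ t) (n : ℕ) :
    ∫⁻ x, ENNReal.ofReal (x ^ (2 * n)) ∂ν ≤ ∫⁻ x, ENNReal.ofReal (x ^ (2 * n)) ∂γ := by
  have hlim : ∀ x : ℝ, liminf (fun h : ℝ => ENNReal.ofReal ((x * Real.sinc (h * x)) ^ (2 * n)))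
      (𝓝[>] 0) = ENNReal.ofReal (x ^ (2 * n)) := by
    intro x
    apply Tendsto.liminf_eq
    apply ENNReal.tendsto_ofReal
    have hc : Continuous fun h : ℝ => (x * Real.sinc (h * x)) ^ (2 * n) := by
      have := Real.continuous_sinc
      fun_prop
    have := hc.tendsto 0
    simp only [zero_mul, Real.sinc_zero, mul_one] at this
    exact this.mono_left nhdsWithin_le_nhds
  have hm : ∀ h : ℝ, Measurable fun x : ℝ => ENNReal.ofReal ((x * Real.sinc (h * x)) ^ (2 * n)) := by
    intro h
    have := Real.continuous_sinc
    have hc : Continuous fun x : ℝ => (x * Real.sinc (h * x)) ^ (2 * n) := by fun_prop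
    exact hc.measurable.ennreal_ofReal
  have key : ∀ᶠ h : ℝ in 𝓝[>] 0,
      ∫⁻ x, ENNReal.ofReal ((x * Real.sinc (h * x)) ^ (2 * n)) ∂ν ≤
      ∫⁻ x, ENNReal.ofReal (x ^ (2 * n)) ∂γ := by
    have h1 : ∀ᶠ h : ℝ in 𝓝[>] 0, h * (2 * n : ℕ) < ε := by
      have hc : Continuous fun h : ℝ => h * (2 * n : ℕ) := by fun_prop
      have := hc.tendsto 0
      rw [zero_mul] at this
      exact (this.mono_left nhdsWithin_le_nhds).eventually (gt_mem_nhds hε)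
    filter_upwards [h1, self_mem_nhdsWithin] with h h1 hpos
    have hpos : 0 < h := hpos
    have hint : ∀ (ρ : Measure ℝ) [IsProbabilityMeasure ρ],
        ∫⁻ x, ENNReal.ofReal ((x * Real.sinc (h * x)) ^ (2 * n)) ∂ρ =
        ENNReal.ofReal ((h⁻¹) ^ (2 * n) * ∫ x, (Real.sin (h * x)) ^ (2 * n) ∂ρ) := by
      intro ρ _
      rw [← integral_const_mul, ofReal_integral_eq_lintegral_ofReal]
      · simp_rw [aux_sinc h _ hpos, mul_pow]
      · refine Integrable.const_mul ?_ _
        refine Integrable.of_bound (C := 1) (by fun_prop) (ae_of_all _ fun x => ?_)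
        rw [norm_pow]
        exact pow_le_one₀ (norm_nonneg _) (Real.abs_sin_le_one _)
      · refine ae_of_all _ fun x => ?_
        have : 0 ≤ Real.sin (h * x) ^ (2 * n) := by rw [pow_mul]; positivity
        simp only [Pi.zero_apply]
        positivity
    rw [hint ν, aux_sin_pow_eq ν γ ε hcf h _ hpos h1, ← hint γ]
    refine lintegral_mono fun x => ENNReal.ofReal_le_ofReal ?_
    rw [pow_mul, pow_mul]
    refine pow_le_pow_left₀ (sq_nonneg _) ?_ _
    rw [mul_pow]
    have := (sq_le_one_iff_abs_le_one _).2 (Real.abs_sinc_le_one (h * x))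
    nlinarith [sq_nonneg x]
  calc ∫⁻ x, ENNReal.ofReal (x ^ (2 * n)) ∂ν
      = ∫⁻ x, liminf (fun h : ℝ => ENNReal.ofReal ((x * Real.sinc (h * x)) ^ (2 * n)))
          (𝓝[>] 0) ∂ν := by simp_rw [hlim]
    _ ≤ _ := lintegral_liminf_le hm
    _ ≤ _ := liminf_le_of_frequently_le' key.frequently

lemma aux_cosh (ρ : Measure ℝ) (c : ℝ) :
    ∫⁻ x, ENNReal.ofReal (Real.cosh (c * x)) ∂ρ =
      ∑' n : ℕ, ENNReal.ofReal (c ^ (2 * n) / (2 * n).factorial) *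
        ∫⁻ x, ENNReal.ofReal (x ^ (2 * n)) ∂ρ := by
  have hnn : ∀ (y : ℝ) (n : ℕ), 0 ≤ y ^ (2 * n) := fun y n => by rw [pow_mul]; positivity
  have : ∀ x : ℝ, ENNReal.ofReal (Real.cosh (c * x)) =
      ∑' n : ℕ, ENNReal.ofReal (c ^ (2 * n) / (2 * n).factorial) * ENNReal.ofReal (x ^ (2 * n)) := by
    intro x
    rw [Real.cosh_eq_tsum, ENNReal.ofReal_tsum_of_nonneg _ (Real.hasSum_cosh _).summable]
    · refine tsum_congr fun n => ?_
      rw [← ENNReal.ofReal_mul (div_nonneg (hnn _ _) (by positivity))]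
      congr 1
      rw [mul_pow]
      ring
    · exact fun n => div_nonneg (hnn _ _) (by positivity)
  simp_rw [this]
  rw [lintegral_tsum (fun n => by fun_prop)]
  refine tsum_congr fun n => ?_
  rw [lintegral_const_mul _ (by fun_prop)]

lemma aux_exp_integrable (ν γ : Measure ℝ) [IsProbabilityMeasure ν] [IsProbabilityMeasure γ]
    (ε : ℝ) (hε : 0 < ε) (hcf : ∀ t, |t| < ε → charFun ν t = charFun γ t)
    (hγ : ∀ c : ℝ, Integrable (fun x => Real.exp (c * x)) γ) (c : ℝ) :
    Integrable (fun x => Real.exp (c * x)) ν := by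
  have hcosh : Integrable (fun x => Real.cosh (c * x)) γ := by
    have := ((hγ c).add (hγ (-c))).div_const 2
    refine this.congr (ae_of_all _ fun x => ?_)
    simp [Real.cosh_eq]
  have hle : ∫⁻ x, ENNReal.ofReal (Real.cosh (c * x)) ∂ν ≤
      ∫⁻ x, ENNReal.ofReal (Real.cosh (c * x)) ∂γ := by
    rw [aux_cosh, aux_cosh]
    exact ENNReal.tsum_le_tsum fun n => mul_le_mul_right (aux_moment_le ν γ ε hε hcf n) _
  have hν : Integrable (fun x => Real.cosh (c * x)) ν := by
    refine ⟨by fun_prop, ?_⟩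
    rw [hasFiniteIntegral_iff_ofReal (ae_of_all _ fun x => (Real.cosh_pos _).le)]
    refine hle.trans_lt ?_
    rw [← hasFiniteIntegral_iff_ofReal (ae_of_all _ fun x => (Real.cosh_pos _).le)]
    exact hcosh.2
  refine (hν.const_mul 2).mono' (by fun_prop) (ae_of_all _ fun x => ?_)
  rw [Real.norm_of_nonneg (Real.exp_pos _).le, Real.cosh_eq]
  linarith [Real.exp_pos (-(c * x))]

lemma aux_charFun_eq (ν γ : Measure ℝ) [IsProbabilityMeasure ν] [IsProbabilityMeasure γ]
    (ε : ℝ) (hε : 0 < ε) (hcf : ∀ t, |t| < ε → charFun ν t = charFun γ t)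
    (hγ : ∀ c : ℝ, Integrable (fun x => Real.exp (c * x)) γ) (t : ℝ) :
    charFun ν t = charFun γ t := by
  have han : ∀ (ρ : Measure ℝ), (∀ c : ℝ, Integrable (fun x => Real.exp (c * x)) ρ) →
      AnalyticOnNhd ℂ (complexMGF id ρ) Set.univ := by
    intro ρ hρ
    have h1 : integrableExpSet id ρ = Set.univ := Set.eq_univ_of_forall fun c => hρ c
    have := analyticOnNhd_complexMGF (X := id) (μ := ρ)
    simpa [h1] using this
  have hν := aux_exp_integrable ν γ ε hε hcf hγ
  have heq : complexMGF id ν = complexMGF id γ := by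
    refine (han ν hν).eq_of_frequently_eq (z₀ := 0) (han γ hγ) ?_
    have ht : Tendsto (fun s : ℝ => (s : ℂ) * Complex.I) (𝓝[>] 0) (𝓝[≠] 0) := by
      refine tendsto_nhdsWithin_iff.2 ⟨?_, ?_⟩
      · have hc : Continuous fun s : ℝ => (s : ℂ) * Complex.I := by fun_prop
        have := hc.tendsto 0
        simp only [Complex.ofReal_zero, zero_mul] at this
        exact this.mono_left nhdsWithin_le_nhds
      · filter_upwards [self_mem_nhdsWithin] with s hs
        have : s ≠ 0 := ne_of_gt hs
        simpa using this
    refine ht.frequently (Eventually.frequently ?_)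
    filter_upwards [Ioo_mem_nhdsGT hε] with s hs
    rw [complexMGF_id_mul_I, complexMGF_id_mul_I]
    exact hcf s (by rw [abs_of_pos hs.1]; exact hs.2)
  rw [← complexMGF_id_mul_I, heq, complexMGF_id_mul_I]

/-- analytic continuation, Lukacs: if the characteristic function of a
probability measure `μ` on `ℝ^K` agrees with the Gaussian characteristic function
`exp(i⟨m,ω⟩ − ½⟨ω,Σω⟩)` on an open neighborhood of the origin, then it agrees with it
on all of `ℝ^K`; i.e. `μ` is the Gaussian measure with mean `m` and covariance `Σ`. -/
theorem stmt6 {K : ℕ} (μ : Measure (Fin K → ℝ)) [IsProbabilityMeasure μ]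
    (m : Fin K → ℝ) (S : Matrix (Fin K) (Fin K) ℝ) (hS : S.PosSemidef)
    (V : Set (Fin K → ℝ)) (hV : IsOpen V) (h0 : (0 : Fin K → ℝ) ∈ V)
    (hGauss : ∀ ω ∈ V, charM μ ω = gaussCF m S ω) :
    ∀ ω, charM μ ω = gaussCF m S ω := by
  intro ω
  have hLm : Measurable fun x : Fin K → ℝ => ∑ k, ω k * x k := by fun_prop
  set ν : Measure ℝ := μ.map (fun x : Fin K → ℝ => ∑ k, ω k * x k) with hνdef
  haveI : IsProbabilityMeasure ν := Measure.isProbabilityMeasure_map hLm.aemeasurable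
  have hb : 0 ≤ ∑ k1, ∑ k2, ω k1 * S k1 k2 * ω k2 := by
    have := hS.dotProduct_mulVec_nonneg ω
    simpa [dotProduct, Matrix.mulVec, Finset.mul_sum, mul_assoc] using this
  set b : NNReal := ⟨_, hb⟩ with hbdef
  have hbc : (b : ℝ) = ∑ k1, ∑ k2, ω k1 * S k1 k2 * ω k2 := rfl
  set γ : Measure ℝ := gaussianReal (∑ k, m k * ω k) b with hγdef
  have h1 : ∀ t : ℝ, charFun ν t = charM μ (t • ω) := by
    intro t
    rw [charFun_apply_real, hνdef, integral_map hLm.aemeasurable (by fun_prop), charM]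
    refine integral_congr_ae (ae_of_all _ fun x => ?_)
    simp only [Pi.smul_apply, smul_eq_mul, mul_assoc, ← Finset.mul_sum]
    congr 1
    push_cast
    ring
  have h2 : ∀ t : ℝ, charFun γ t = gaussCF m S (t • ω) := by
    intro t
    rw [hγdef, charFun_gaussianReal, gaussCF, hbc]
    have e1 : ∑ k, m k * (t • ω) k = t * ∑ k, m k * ω k := by
      rw [Finset.mul_sum]
      exact Finset.sum_congr rfl fun k _ => by simp; ring
    have e2 : ∑ k1, ∑ k2, (t • ω) k1 * S k1 k2 * (t • ω) k2 =
        t ^ 2 * ∑ k1, ∑ k2, ω k1 * S k1 k2 * ω k2 := by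
      simp_rw [Finset.mul_sum]
      exact Finset.sum_congr rfl fun k _ => Finset.sum_congr rfl fun l _ => by simp; ring
    rw [e1, e2, Complex.ofReal_mul, Complex.ofReal_mul, Complex.ofReal_pow]
    congr 1
    ring
  have hc : Continuous fun t : ℝ => t • ω := by fun_prop
  have hn : (fun t : ℝ => t • ω) ⁻¹' V ∈ 𝓝 (0 : ℝ) :=
    (hV.preimage hc).mem_nhds (by simpa using h0)
  obtain ⟨ε, hε, hball⟩ := Metric.mem_nhds_iff.1 hn
  have hfin := aux_charFun_eq ν γ ε hε (fun t ht => by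
    rw [h1, h2]
    exact hGauss _ (hball (by simpa using ht)))
    (fun c => integrable_exp_mul_gaussianReal c) 1
  rw [h1, h2, one_smul] at hfin
  exact hfin
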